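/- arXiv:1808.03596 — 9 statements merged into one kernel-verified Lean document; each statement's English description precedes it below -/
import Mathlib

section
/- Consider the ODE system on ℳ = ℝ^{n+2m+2} × 𝕋ⁿ: φ̇ᵢ = ωᵢ + 2xuᵢ, u̇ᵢ = 0 (1 ≤ i ≤ n), ẏ = Σᵢuᵢ² + x² + y², ẋ = −2xy, q̇ⱼ = pⱼ² + qⱼ², ṗⱼ = −2pⱼqⱼ (1 ≤ j ≤ m). Let z : ℝ → ℳ be a solution whose orbit is recurrent, in the sense that there exists a sequence of times t_k → +∞ with z(t_k) → z(0). Then the initial point z(0) satisfies u = 0, x = y = 0, p = q = 0, i.e., z(0) lies on the torus 𝒯 = {u = 0, x = y = 0, p = q = 0}. Consequently 𝒯 is the unique Kronecker n-torus of this system: every point belonging to some Kronecker torus lies on 𝒯. -/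
open Real Filter Topology

/-- A function with nonnegative derivative which is recurrent has zero derivative at time 0. -/
theorem recurrent_deriv_zero (f g : ℝ → ℝ) (hf : ∀ t, HasDerivAt f (g t) t) (hg : ∀ t, 0 ≤ g t)
    (tk : ℕ → ℝ) (htk : Tendsto tk atTop atTop)
    (hrec : Tendsto (fun k => f (tk k)) atTop (𝓝 (f 0))) : g 0 = 0 := by
  have hmono : Monotone f := monotone_of_hasDerivAt_nonneg hf hg
  have hconst : ∀ t ∈ Set.Ici (0 : ℝ), f t = f 0 := by
    intro t ht
    apply le_antisymm _ (hmono ht)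
    apply ge_of_tendsto hrec
    filter_upwards [htk.eventually_ge_atTop t] with k hk
    exact hmono hk
  have h1 : HasDerivWithinAt f (g 0) (Set.Ici 0) 0 := (hf 0).hasDerivWithinAt
  have h2 : HasDerivWithinAt f 0 (Set.Ici 0) 0 :=
    (hasDerivWithinAt_const (0 : ℝ) (Set.Ici 0) (f 0)).congr hconst rfl
  exact (uniqueDiffWithinAt_Ici (0 : ℝ)).eq_deriv _ h1 h2

/-- **Uniqueness of the Kronecker torus.** For the system
`φ̇ᵢ = ωᵢ + 2xuᵢ, u̇ᵢ = 0, ẏ = Σᵢuᵢ² + x² + y², ẋ = −2xy, q̇ⱼ = pⱼ² + qⱼ²,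
ṗⱼ = −2pⱼqⱼ` on ℳ = ℝ^{n+2m+2} × 𝕋ⁿ (angles represented by real lifts, the
torus coordinates compared in ℝ/2πℤ = `AddCircle (2π)`): if a solution is
recurrent — there is a sequence of times `tₖ → +∞` along which the solution
returns to its initial point — then the initial point lies on the torus
𝒯 = {u = 0, x = y = 0, p = q = 0}. Hence 𝒯 is the unique Kronecker n-torus of
the system: every point of any Kronecker torus is recurrent, so it lies on 𝒯. -/
theorem unique_kronecker_torus
    (n m : ℕ) (hn : 1 ≤ n) (ω : Fin n → ℝ)
    (u φ : ℝ → Fin n → ℝ) (x y : ℝ → ℝ) (p q : ℝ → Fin m → ℝ)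
    (hφ : ∀ t i, HasDerivAt (fun s => φ s i) (ω i + 2 * x t * u t i) t)
    (hu : ∀ t i, HasDerivAt (fun s => u s i) 0 t)
    (hy : ∀ t, HasDerivAt y ((∑ i, (u t i) ^ 2) + (x t) ^ 2 + (y t) ^ 2) t)
    (hx : ∀ t, HasDerivAt x (-2 * x t * y t) t)
    (hq : ∀ t j, HasDerivAt (fun s => q s j) ((p t j) ^ 2 + (q t j) ^ 2) t)
    (hp : ∀ t j, HasDerivAt (fun s => p s j) (-2 * p t j * q t j) t)
    (tk : ℕ → ℝ) (htk : Tendsto tk atTop atTop)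
    (hrecu : Tendsto (fun k => u (tk k)) atTop (𝓝 (u 0)))
    (hrecx : Tendsto (fun k => x (tk k)) atTop (𝓝 (x 0)))
    (hrecy : Tendsto (fun k => y (tk k)) atTop (𝓝 (y 0)))
    (hrecp : Tendsto (fun k => p (tk k)) atTop (𝓝 (p 0)))
    (hrecq : Tendsto (fun k => q (tk k)) atTop (𝓝 (q 0)))
    (hrecφ : ∀ i, Tendsto (fun k => ((φ (tk k) i : ℝ) : AddCircle (2 * π)))
      atTop (𝓝 ((φ 0 i : ℝ) : AddCircle (2 * π)))) :
    u 0 = 0 ∧ x 0 = 0 ∧ y 0 = 0 ∧ p 0 = 0 ∧ q 0 = 0 := by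
  have key := recurrent_deriv_zero y _ hy (fun t => by positivity) tk htk hrecy
  have key2 : ∀ j, (p 0 j) ^ 2 + (q 0 j) ^ 2 = 0 := fun j =>
    recurrent_deriv_zero (fun s => q s j) (fun t => (p t j) ^ 2 + (q t j) ^ 2)
      (fun t => hq t j) (fun t => by positivity) tk htk (tendsto_pi_nhds.1 hrecq j)
  have hs : 0 ≤ ∑ i, (u 0 i) ^ 2 := Finset.sum_nonneg fun i _ => sq_nonneg _
  have hx2 := sq_nonneg (x 0)
  have hy2 := sq_nonneg (y 0)
  have hs0 : ∑ i, (u 0 i) ^ 2 = 0 := by linarith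
  refine ⟨?_, ?_, ?_, ?_, ?_⟩
  · funext i
    exact pow_eq_zero_iff two_ne_zero |>.1
      ((Finset.sum_eq_zero_iff_of_nonneg fun i _ => sq_nonneg _).1 hs0 i (Finset.mem_univ i))
  · exact pow_eq_zero_iff two_ne_zero |>.1 (by linarith : x 0 ^ 2 = 0)
  · exact pow_eq_zero_iff two_ne_zero |>.1 (by linarith : y 0 ^ 2 = 0)
  · funext j
    exact pow_eq_zero_iff two_ne_zero |>.1
      (by linarith [key2 j, sq_nonneg (p 0 j), sq_nonneg (q 0 j)] : p 0 j ^ 2 = 0)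
  · funext j
    exact pow_eq_zero_iff two_ne_zero |>.1
      (by linarith [key2 j, sq_nonneg (p 0 j), sq_nonneg (q 0 j)] : q 0 j ^ 2 = 0)
end

section
/- Let n = 1, m ≥ 0, and ω ≠ 0 a real number. Consider the ODE system on ℝ^{2m+3} × 𝕋¹: φ̇ = ω + 2xu, u̇ = 0, ẏ = u² + x² + y², ẋ = −2xy, q̇ⱼ = pⱼ² + qⱼ², ṗⱼ = −2pⱼqⱼ (1 ≤ j ≤ m). Then any periodic solution of this system has u = 0, x = y = 0, p = q = 0 identically; i.e., the circle γ = {u = 0, x = y = 0, p = q = 0} is the unique periodic orbit of this Hamiltonian system with m + 2 degrees of freedom in the whole phase space. -/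
open Real

/-- A periodic function with nonnegative derivative has zero derivative. -/
theorem deriv_zero_of_periodic (f g : ℝ → ℝ) (hf : ∀ t, HasDerivAt f (g t) t)
    (hg : ∀ t, 0 ≤ g t) (T : ℝ) (hT : 0 < T) (hper : ∀ t, f (t + T) = f t) (t : ℝ) :
    g t = 0 := by
  have hmono : Monotone f :=
    monotone_of_deriv_nonneg (fun s => (hf s).differentiableAt)
      (fun s => by rw [(hf s).deriv]; exact hg s)
  have hle : ∀ a b, f b ≤ f a := by
    intro a b
    obtain ⟨n, hn⟩ := exists_nat_ge ((b - a) / T)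
    have h1 : b ≤ a + n * T := by
      rw [div_le_iff₀ hT] at hn
      linarith
    have hp : Function.Periodic f T := hper
    calc f b ≤ f (a + n * T) := hmono h1
      _ = f a := hp.nat_mul n a
  have hc : f = fun _ => f 0 := funext fun s => le_antisymm (hle _ _) (hle _ _)
  have h0 := hf t
  rw [hc] at h0
  exact h0.unique (hasDerivAt_const t (f 0))

/-- **A unique periodic orbit in the whole phase space** (case n = 1, ω ≠ 0).
For the system `φ̇ = ω + 2xu, u̇ = 0, ẏ = u² + x² + y², ẋ = −2xy,
q̇ⱼ = pⱼ² + qⱼ², ṗⱼ = −2pⱼqⱼ` on ℝ^{2m+3} × 𝕋¹ (the angle φ is represented by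
its real lift and compared in ℝ/2πℤ = `AddCircle (2π)`): every periodic solution
(a nonconstant solution of period T > 0) satisfies `u = 0, x = y = 0, p = q = 0`
identically. Thus the circle γ = {u = 0, x = y = 0, p = q = 0} is the unique
periodic orbit of this Hamiltonian system with m + 2 degrees of freedom. -/
theorem unique_periodic_orbit
    (m : ℕ) (ω : ℝ) (hω : ω ≠ 0)
    (u φ x y : ℝ → ℝ) (p q : ℝ → Fin m → ℝ)
    (hφ : ∀ t, HasDerivAt φ (ω + 2 * x t * u t) t)
    (hu : ∀ t, HasDerivAt u 0 t)
    (hy : ∀ t, HasDerivAt y ((u t) ^ 2 + (x t) ^ 2 + (y t) ^ 2) t)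
    (hx : ∀ t, HasDerivAt x (-2 * x t * y t) t)
    (hq : ∀ t j, HasDerivAt (fun s => q s j) ((p t j) ^ 2 + (q t j) ^ 2) t)
    (hp : ∀ t j, HasDerivAt (fun s => p s j) (-2 * p t j * q t j) t)
    (T : ℝ) (hT : 0 < T)
    (hper : ∀ t : ℝ, u (t + T) = u t ∧ x (t + T) = x t ∧ y (t + T) = y t ∧
      p (t + T) = p t ∧ q (t + T) = q t ∧
      ((φ (t + T) : ℝ) : AddCircle (2 * π)) = ((φ t : ℝ) : AddCircle (2 * π)))
    (hnonconst : ∃ t s : ℝ,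
      ¬(u t = u s ∧ x t = x s ∧ y t = y s ∧ p t = p s ∧ q t = q s ∧
        ((φ t : ℝ) : AddCircle (2 * π)) = ((φ s : ℝ) : AddCircle (2 * π)))) :
    ∀ t : ℝ, u t = 0 ∧ x t = 0 ∧ y t = 0 ∧ p t = 0 ∧ q t = 0 := by
  intro t
  have h1 := deriv_zero_of_periodic y _ hy (fun t => by positivity) T hT
    (fun s => (hper s).2.2.1) t
  have h2 : ∀ j, (p t j) ^ 2 + (q t j) ^ 2 = 0 := fun j =>
    deriv_zero_of_periodic (fun s => q s j) (fun t => (p t j) ^ 2 + (q t j) ^ 2)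
      (fun t => hq t j) (fun t => by positivity) T hT
      (fun s => congrFun (hper s).2.2.2.2.1 j) t
  refine ⟨?_, ?_, ?_, funext fun j => ?_, funext fun j => ?_⟩
  · exact pow_eq_zero_iff two_ne_zero |>.mp (by nlinarith [sq_nonneg (u t), sq_nonneg (x t), sq_nonneg (y t)])
  · exact pow_eq_zero_iff two_ne_zero |>.mp (by nlinarith [sq_nonneg (u t), sq_nonneg (x t), sq_nonneg (y t)])
  · exact pow_eq_zero_iff two_ne_zero |>.mp (by nlinarith [sq_nonneg (u t), sq_nonneg (x t), sq_nonneg (y t)])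
  · exact pow_eq_zero_iff two_ne_zero |>.mp (by nlinarith [h2 j, sq_nonneg (p t j), sq_nonneg (q t j)])
  · exact pow_eq_zero_iff two_ne_zero |>.mp (by nlinarith [h2 j, sq_nonneg (p t j), sq_nonneg (q t j)])
end

section
/- On ℳ = ℝ^{n+2m+2} × 𝕋ⁿ with the symplectic structure 𝛚 = Σᵢ duᵢ ∧ dφᵢ + dx ∧ dy + Σⱼ dpⱼ ∧ dqⱼ, the Poisson bracket of two functions F, G is {F, G} = Σᵢ(∂F/∂uᵢ · ∂G/∂φᵢ − ∂F/∂φᵢ · ∂G/∂uᵢ) + (∂F/∂x · ∂G/∂y − ∂F/∂y · ∂G/∂x) + Σⱼ(∂F/∂pⱼ · ∂G/∂qⱼ − ∂F/∂qⱼ · ∂G/∂pⱼ). The n + m + 1 functions H = Σᵢ(ωᵢuᵢ + xuᵢ²) + x³/3 + xy² + Σⱼ(pⱼ³/3 + pⱼqⱼ²), uᵢ (1 ≤ i ≤ n), and Fⱼ = pⱼ³/3 + pⱼqⱼ² (1 ≤ j ≤ m) are pairwise in involution: the Poisson bracket of any two of them vanishes identically on ℳ. -/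
open Real

/-- The Poisson bracket `{F, G}` of two functions of the coordinates
`(u, x, y, p, q, φ)` on ℳ = ℝ^{n+2m+2} × 𝕋ⁿ associated with the symplectic
structure `𝛚 = Σᵢ duᵢ ∧ dφᵢ + dx ∧ dy + Σⱼ dpⱼ ∧ dqⱼ`:
`{F, G} = Σᵢ(∂F/∂uᵢ ∂G/∂φᵢ − ∂F/∂φᵢ ∂G/∂uᵢ) + (∂F/∂x ∂G/∂y − ∂F/∂y ∂G/∂x)
 + Σⱼ(∂F/∂pⱼ ∂G/∂qⱼ − ∂F/∂qⱼ ∂G/∂pⱼ)`. -/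
noncomputable def poissonBracket (n m : ℕ)
    (F G : (Fin n → ℝ) → ℝ → ℝ → (Fin m → ℝ) → (Fin m → ℝ) → (Fin n → ℝ) → ℝ)
    (u : Fin n → ℝ) (x y : ℝ) (p q : Fin m → ℝ) (φ : Fin n → ℝ) : ℝ :=
  (∑ i, (deriv (fun s => F (Function.update u i s) x y p q φ) (u i)
           * deriv (fun s => G u x y p q (Function.update φ i s)) (φ i)
         - deriv (fun s => F u x y p q (Function.update φ i s)) (φ i)
           * deriv (fun s => G (Function.update u i s) x y p q φ) (u i)))
  + (deriv (fun s => F u s y p q φ) x * deriv (fun s => G u x s p q φ) y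
     - deriv (fun s => F u x s p q φ) y * deriv (fun s => G u s y p q φ) x)
  + ∑ j, (deriv (fun s => F u x y (Function.update p j s) q φ) (p j)
            * deriv (fun s => G u x y p (Function.update q j s) φ) (q j)
          - deriv (fun s => F u x y p (Function.update q j s) φ) (q j)
            * deriv (fun s => G u x y (Function.update p j s) q φ) (p j))

/-- The family of n + m + 1 functions `H`, `uᵢ` (1 ≤ i ≤ n),
`Fⱼ = pⱼ³/3 + pⱼqⱼ²` (1 ≤ j ≤ m), where
`H = Σᵢ(ωᵢuᵢ + xuᵢ²) + x³/3 + xy² + Σⱼ(pⱼ³/3 + pⱼqⱼ²)`. -/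
noncomputable def integralFamily (n m : ℕ) (ω : Fin n → ℝ) :
    Unit ⊕ Fin n ⊕ Fin m →
      (Fin n → ℝ) → ℝ → ℝ → (Fin m → ℝ) → (Fin m → ℝ) → (Fin n → ℝ) → ℝ
  | Sum.inl _ => fun u x y p q _ =>
      (∑ i, (ω i * u i + x * (u i) ^ 2)) + x ^ 3 / 3 + x * y ^ 2
        + ∑ j, ((p j) ^ 3 / 3 + p j * (q j) ^ 2)
  | Sum.inr (Sum.inl i) => fun u _ _ _ _ _ => u i
  | Sum.inr (Sum.inr j) => fun _ _ _ p q _ => (p j) ^ 3 / 3 + p j * (q j) ^ 2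

/-- The derivative in one coordinate of a constant plus a sum of one-coordinate functions. -/
theorem deriv_const_add_sum_update {m : ℕ} (C : ℝ) (g : Fin m → ℝ → ℝ) (p : Fin m → ℝ)
    (j : Fin m) (t : ℝ) :
    deriv (fun s => C + ∑ k, g k (Function.update p j s k)) t = deriv (g j) t := by
  have h : (fun s => C + ∑ k, g k (Function.update p j s k))
      = fun s => (C + ∑ k ∈ Finset.univ.erase j, g k (p k)) + g j s := by
    funext s
    rw [← Finset.add_sum_erase _ _ (Finset.mem_univ j)]
    have : ∑ k ∈ Finset.univ.erase j, g k (Function.update p j s k)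
        = ∑ k ∈ Finset.univ.erase j, g k (p k) := by
      refine Finset.sum_congr rfl fun k hk => ?_
      rw [Function.update_of_ne (Finset.ne_of_mem_erase hk)]
    rw [this, Function.update_self]
    ring
  rw [h, deriv_const_add]

/-- The gradient of every member of the family: no `φ`-derivatives, and the gradients in
`(x, y)` and in each `(pⱼ, qⱼ)` are multiples of common vectors. -/
theorem integralFamily_gradient (n m : ℕ) (ω : Fin n → ℝ) (a : Unit ⊕ Fin n ⊕ Fin m)
    (u : Fin n → ℝ) (x y : ℝ) (p q : Fin m → ℝ) (φ : Fin n → ℝ) :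
    (∀ i, deriv (fun s => integralFamily n m ω a u x y p q (Function.update φ i s)) (φ i) = 0) ∧
    (∃ d : ℝ,
      deriv (fun s => integralFamily n m ω a u s y p q φ) x
        = d * deriv (fun s => integralFamily n m ω (Sum.inl ()) u s y p q φ) x ∧
      deriv (fun s => integralFamily n m ω a u x s p q φ) y
        = d * deriv (fun s => integralFamily n m ω (Sum.inl ()) u x s p q φ) y) ∧
    (∀ j, ∃ c : ℝ,
      deriv (fun s => integralFamily n m ω a u x y (Function.update p j s) q φ) (p j)
        = c * deriv (fun s : ℝ => s ^ 3 / 3 + s * (q j) ^ 2) (p j) ∧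
      deriv (fun s => integralFamily n m ω a u x y p (Function.update q j s) φ) (q j)
        = c * deriv (fun s : ℝ => (p j) ^ 3 / 3 + p j * s ^ 2) (q j)) := by
  rcases a with a | i | k
  · refine ⟨fun i => by simp [integralFamily], ⟨1, by simp, by simp⟩, fun j => ⟨1, ?_, ?_⟩⟩
    · rw [one_mul]
      exact deriv_const_add_sum_update _ (fun k s => s ^ 3 / 3 + s * (q k) ^ 2) p j (p j)
    · rw [one_mul]
      exact deriv_const_add_sum_update _ (fun k s => (p k) ^ 3 / 3 + p k * s ^ 2) q j (q j)
  · exact ⟨fun _ => by simp [integralFamily], ⟨0, by simp [integralFamily],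
      by simp [integralFamily]⟩, fun j => ⟨0, by simp [integralFamily], by simp [integralFamily]⟩⟩
  · refine ⟨fun _ => by simp [integralFamily], ⟨0, by simp [integralFamily],
      by simp [integralFamily]⟩, fun j => ?_⟩
    by_cases h : k = j
    · subst h
      exact ⟨1, by simp only [integralFamily, Function.update_self, one_mul],
        by simp only [integralFamily, Function.update_self, one_mul]⟩
    · exact ⟨0, by simp [integralFamily, Function.update_of_ne h],
        by simp [integralFamily, Function.update_of_ne h]⟩

/-- **Involutivity of the first integrals.** The n + m + 1 functions `H`,
`uᵢ` (1 ≤ i ≤ n) and `Fⱼ = pⱼ³/3 + pⱼqⱼ²` (1 ≤ j ≤ m) are pairwise in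
involution: the Poisson bracket of any two of them vanishes identically on
ℳ = ℝ^{n+2m+2} × 𝕋ⁿ. -/
theorem integrals_pairwise_in_involution
    (n m : ℕ) (hn : 1 ≤ n) (ω : Fin n → ℝ)
    (a b : Unit ⊕ Fin n ⊕ Fin m)
    (u : Fin n → ℝ) (x y : ℝ) (p q : Fin m → ℝ) (φ : Fin n → ℝ) :
    poissonBracket n m (integralFamily n m ω a) (integralFamily n m ω b)
      u x y p q φ = 0 := by
  obtain ⟨ha1, ⟨d, ha2, ha3⟩, ha4⟩ := integralFamily_gradient n m ω a u x y p q φ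
  obtain ⟨hb1, ⟨e, hb2, hb3⟩, hb4⟩ := integralFamily_gradient n m ω b u x y p q φ
  unfold poissonBracket
  rw [Finset.sum_eq_zero, Finset.sum_eq_zero, ha2, ha3, hb2, hb3]
  · ring
  · intro j _
    obtain ⟨c, h1, h2⟩ := ha4 j
    obtain ⟨c', h3, h4⟩ := hb4 j
    rw [h1, h2, h3, h4]
    ring
  · intro i _
    rw [ha1, hb1]
    ring
end

section
/- Consider the ODE system on M̂ = 𝕋^{2n+2m+2}: φ̇ᵢ = ωᵢ cos uᵢ + sin x · sin 2uᵢ, u̇ᵢ = 0, ẏ = (Σᵢ sin²uᵢ + sin²x + sin²y) cos x, ẋ = −sin x · sin 2y, q̇ⱼ = (sin²pⱼ + sin²qⱼ) cos pⱼ, ṗⱼ = −sin pⱼ · sin 2qⱼ. Let z : ℝ → M̂ be a solution that is entirely contained in the domain D = {−π < uᵢ < π (1 ≤ i ≤ n), −π/2 < x < π/2, −π < y < π, −π/2 < pⱼ < π/2, −π < qⱼ < π (1 ≤ j ≤ m)} (all inequalities understood modulo 2π) and whose orbit is recurrent, i.e., there is a sequence t_k → +∞ with z(t_k) → z(0). Then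 z(0) lies on the torus 𝒯 = {u = 0, x = y = 0, p = q = 0}. Consequently 𝒯 is an isolated Kronecker n-torus of this system: it is the only Kronecker torus entirely contained in D. -/
open Real Filter Topology

lemma aux_int_between (j : ℤ) (h1 : 0 < 2 * π * j) (h2 : 2 * π * j < 2 * π) : False := by
  have hp := Real.pi_pos
  have a : (0:ℝ) < j := by
    by_contra h
    push Not at h
    nlinarith
  have b : (j:ℝ) < 1 := by
    by_contra h
    push Not at h
    nlinarith
  have a' : (0:ℤ) < j := by exact_mod_cast a
  have b' : j < (1:ℤ) := by exact_mod_cast b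
  omega

/-- A monotone angular variable that avoids π and is recurrent has zero initial velocity. -/
lemma aux_rec (f g : ℝ → ℝ) (hf : ∀ t, HasDerivAt f (g t) t) (hg : ∀ t, 0 ≤ g t)
    (hD : ∀ t, ∃ k : ℤ, f t - 2 * π * k ∈ Set.Ioo (-π) π)
    (tk : ℕ → ℝ) (htk : Tendsto tk atTop atTop)
    (hrec : Tendsto (fun k => ((f (tk k) : ℝ) : AddCircle (2 * π)))
      atTop (𝓝 ((f 0 : ℝ) : AddCircle (2 * π)))) : g 0 = 0 := by
  have hcont : Continuous f := continuous_iff_continuousAt.2 fun t => (hf t).continuousAt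
  have hmono : Monotone f := monotone_of_hasDerivAt_nonneg hf hg
  obtain ⟨k, hk1, hk2⟩ := hD 0
  have hub : ∀ t, 0 ≤ t → f t < 2 * π * k + π := by
    intro t ht
    by_contra h
    push Not at h
    obtain ⟨s, -, hs⟩ := intermediate_value_Icc ht hcont.continuousOn
      (show 2 * π * k + π ∈ Set.Icc (f 0) (f t) from ⟨by linarith, h⟩)
    obtain ⟨k', h1, h2⟩ := hD s
    rw [hs] at h1 h2
    apply aux_int_between (k - k' + 1) <;> push_cast <;> nlinarith
  have hconst : ∀ t, 0 ≤ t → f t = f 0 := by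
    intro t ht
    by_contra hne
    have hlt : f 0 < f t := lt_of_le_of_ne (hmono ht) (Ne.symm hne)
    have hcl : IsClosed ((fun r : ℝ => (r : AddCircle (2 * π))) ''
        Set.Icc (f t) (2 * π * k + π)) :=
      (isCompact_Icc.image (AddCircle.continuous_mk' (2 * π))).isClosed
    have hmem := hcl.mem_of_tendsto hrec (by
      filter_upwards [htk.eventually_ge_atTop t] with i hi
      exact ⟨f (tk i), ⟨hmono hi, (hub _ (ht.trans hi)).le⟩, rfl⟩)
    obtain ⟨s, ⟨hs1, hs2⟩, hs⟩ := hmem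
    have hs' : ((s - f 0 : ℝ) : AddCircle (2 * π)) = 0 := by
      rw [AddCircle.coe_sub, sub_eq_zero]
      exact hs
    obtain ⟨j, hj⟩ := (AddCircle.coe_eq_zero_iff _).1 hs'
    rw [zsmul_eq_mul] at hj
    apply aux_int_between j <;> linarith
  have h1 : HasDerivWithinAt f (g 0) (Set.Ici 0) 0 := (hf 0).hasDerivWithinAt
  have h2 : HasDerivWithinAt f 0 (Set.Ici 0) 0 :=
    (hasDerivWithinAt_const (0:ℝ) (Set.Ici 0) (f 0)).congr (fun t ht => hconst t ht) rfl
  exact (uniqueDiffOn_Ici (0:ℝ) 0 (by simp)).eq_deriv _ h1 h2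

lemma aux_cos (r : ℝ) (h : ∃ k : ℤ, r - 2 * π * k ∈ Set.Ioo (-(π / 2)) (π / 2)) :
    0 < Real.cos r := by
  obtain ⟨k, hk⟩ := h
  have := Real.cos_pos_of_mem_Ioo hk
  rwa [show r - 2 * π * k = r - k * (2 * π) by ring, Real.cos_sub_int_mul_two_pi] at this

lemma aux_zero (r : ℝ) (h : ∃ k : ℤ, r - 2 * π * k ∈ Set.Ioo (-π) π)
    (hs : Real.sin r = 0) : (r : AddCircle (2 * π)) = 0 := by
  obtain ⟨k, h1, h2⟩ := h
  have h3 : Real.sin (r - 2 * π * k) = 0 := by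
    rw [show r - 2 * π * k = r - k * (2 * π) by ring, Real.sin_sub_int_mul_two_pi, hs]
  have h4 := (Real.sin_eq_zero_iff_of_lt_of_lt h1 h2).1 h3
  rw [AddCircle.coe_eq_zero_iff]
  exact ⟨k, by rw [zsmul_eq_mul]; linarith⟩

lemma aux_half (r : ℝ) (h : ∃ k : ℤ, r - 2 * π * k ∈ Set.Ioo (-(π / 2)) (π / 2)) :
    ∃ k : ℤ, r - 2 * π * k ∈ Set.Ioo (-π) π := by
  obtain ⟨k, h1, h2⟩ := h
  have := Real.pi_pos
  exact ⟨k, by linarith, by linarith⟩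

/-- **Isolatedness of the torus 𝒯 in the compactified system.** Consider the
system on M̂ = 𝕋^{2n+2m+2} (all coordinates angular, represented by real lifts,
compared in ℝ/2πℤ = `AddCircle (2π)`):
`φ̇ᵢ = ωᵢ cos uᵢ + sin x · sin 2uᵢ, u̇ᵢ = 0,
ẏ = (Σᵢ sin²uᵢ + sin²x + sin²y) cos x, ẋ = −sin x · sin 2y,
q̇ⱼ = (sin²pⱼ + sin²qⱼ) cos pⱼ, ṗⱼ = −sin pⱼ · sin 2qⱼ`.
If a solution is entirely contained (mod 2π) in the domain
`D = {−π < uᵢ < π, −π/2 < x < π/2, −π < y < π, −π/2 < pⱼ < π/2, −π < qⱼ < π}`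
and is recurrent (there is a sequence of times `tₖ → +∞` along which it returns
to its initial point), then its initial point lies on the torus
𝒯 = {u = 0, x = y = 0, p = q = 0}. Consequently 𝒯 is an isolated Kronecker
n-torus: it is the only Kronecker torus entirely contained in `D`. -/
theorem isolated_kronecker_torus_compact
    (n m : ℕ) (hn : 1 ≤ n) (ω : Fin n → ℝ)
    (u φ : ℝ → Fin n → ℝ) (x y : ℝ → ℝ) (p q : ℝ → Fin m → ℝ)
    (hφ : ∀ t i, HasDerivAt (fun s => φ s i)
      (ω i * Real.cos (u t i) + Real.sin (x t) * Real.sin (2 * u t i)) t)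
    (hu : ∀ t i, HasDerivAt (fun s => u s i) 0 t)
    (hy : ∀ t, HasDerivAt y
      (((∑ i, Real.sin (u t i) ^ 2) + Real.sin (x t) ^ 2 + Real.sin (y t) ^ 2)
        * Real.cos (x t)) t)
    (hx : ∀ t, HasDerivAt x (-(Real.sin (x t) * Real.sin (2 * y t))) t)
    (hq : ∀ t j, HasDerivAt (fun s => q s j)
      ((Real.sin (p t j) ^ 2 + Real.sin (q t j) ^ 2) * Real.cos (p t j)) t)
    (hp : ∀ t j, HasDerivAt (fun s => p s j)
      (-(Real.sin (p t j) * Real.sin (2 * q t j))) t)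
    -- the solution lies in the domain D (all inequalities understood mod 2π)
    (hDu : ∀ t i, ∃ k : ℤ, u t i - 2 * π * k ∈ Set.Ioo (-π) π)
    (hDx : ∀ t, ∃ k : ℤ, x t - 2 * π * k ∈ Set.Ioo (-(π / 2)) (π / 2))
    (hDy : ∀ t, ∃ k : ℤ, y t - 2 * π * k ∈ Set.Ioo (-π) π)
    (hDp : ∀ t j, ∃ k : ℤ, p t j - 2 * π * k ∈ Set.Ioo (-(π / 2)) (π / 2))
    (hDq : ∀ t j, ∃ k : ℤ, q t j - 2 * π * k ∈ Set.Ioo (-π) π)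
    -- recurrence: z(tₖ) → z(0) on the torus, with tₖ → +∞
    (tk : ℕ → ℝ) (htk : Tendsto tk atTop atTop)
    (hrecu : ∀ i, Tendsto (fun k => ((u (tk k) i : ℝ) : AddCircle (2 * π)))
      atTop (𝓝 ((u 0 i : ℝ) : AddCircle (2 * π))))
    (hrecx : Tendsto (fun k => ((x (tk k) : ℝ) : AddCircle (2 * π)))
      atTop (𝓝 ((x 0 : ℝ) : AddCircle (2 * π))))
    (hrecy : Tendsto (fun k => ((y (tk k) : ℝ) : AddCircle (2 * π)))
      atTop (𝓝 ((y 0 : ℝ) : AddCircle (2 * π))))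
    (hrecp : ∀ j, Tendsto (fun k => ((p (tk k) j : ℝ) : AddCircle (2 * π)))
      atTop (𝓝 ((p 0 j : ℝ) : AddCircle (2 * π))))
    (hrecq : ∀ j, Tendsto (fun k => ((q (tk k) j : ℝ) : AddCircle (2 * π)))
      atTop (𝓝 ((q 0 j : ℝ) : AddCircle (2 * π))))
    (hrecφ : ∀ i, Tendsto (fun k => ((φ (tk k) i : ℝ) : AddCircle (2 * π)))
      atTop (𝓝 ((φ 0 i : ℝ) : AddCircle (2 * π)))) :
    (∀ i, ((u 0 i : ℝ) : AddCircle (2 * π)) = 0) ∧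
    ((x 0 : ℝ) : AddCircle (2 * π)) = 0 ∧
    ((y 0 : ℝ) : AddCircle (2 * π)) = 0 ∧
    (∀ j, ((p 0 j : ℝ) : AddCircle (2 * π)) = 0) ∧
    (∀ j, ((q 0 j : ℝ) : AddCircle (2 * π)) = 0) := by
  have hsum : ∀ t, 0 ≤ ∑ i, Real.sin (u t i) ^ 2 :=
    fun t => Finset.sum_nonneg fun i _ => sq_nonneg _
  have hY := aux_rec y _ hy (fun t => mul_nonneg
    (add_nonneg (add_nonneg (hsum t) (sq_nonneg _)) (sq_nonneg _))
    (aux_cos _ (hDx t)).le) hDy tk htk hrecy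
  have hY' := (mul_eq_zero.1 hY).resolve_right (aux_cos _ (hDx 0)).ne'
  have e1 := hsum 0
  have e2 := sq_nonneg (Real.sin (x 0))
  have e3 := sq_nonneg (Real.sin (y 0))
  have hQ : ∀ j, Real.sin (p 0 j) ^ 2 + Real.sin (q 0 j) ^ 2 = 0 := by
    intro j
    have h := aux_rec (fun s => q s j) _ (fun t => hq t j) (fun t => mul_nonneg
      (add_nonneg (sq_nonneg _) (sq_nonneg _)) (aux_cos _ (hDp t j)).le)
      (fun t => hDq t j) tk htk (hrecq j)
    exact (mul_eq_zero.1 h).resolve_right (aux_cos _ (hDp 0 j)).ne'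
  refine ⟨fun i => ?_, ?_, ?_, fun j => ?_, fun j => ?_⟩
  · apply aux_zero _ (hDu 0 i)
    have h0 : ∑ i, Real.sin (u 0 i) ^ 2 = 0 := by linarith
    exact pow_eq_zero_iff two_ne_zero |>.1
      ((Finset.sum_eq_zero_iff_of_nonneg fun i _ => sq_nonneg _).1 h0 i (Finset.mem_univ i))
  · apply aux_zero _ (aux_half _ (hDx 0))
    exact pow_eq_zero_iff two_ne_zero |>.1 (by linarith)
  · apply aux_zero _ (hDy 0)
    exact pow_eq_zero_iff two_ne_zero |>.1 (by linarith)
  · apply aux_zero _ (aux_half _ (hDp 0 j))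
    have := hQ j
    have := sq_nonneg (Real.sin (p 0 j))
    have := sq_nonneg (Real.sin (q 0 j))
    exact pow_eq_zero_iff two_ne_zero |>.1 (by linarith)
  · apply aux_zero _ (hDq 0 j)
    have := hQ j
    have := sq_nonneg (Real.sin (p 0 j))
    have := sq_nonneg (Real.sin (q 0 j))
    exact pow_eq_zero_iff two_ne_zero |>.1 (by linarith)
end

section
/- The n + m + 1 functions Ĥ = Σᵢ(ωᵢ sin uᵢ + sin x · sin²uᵢ) + sin³x/3 + sin x · sin²y + Σⱼ(sin³pⱼ/3 + sin pⱼ · sin²qⱼ), sin uᵢ (1 ≤ i ≤ n), and F̂ⱼ = sin³pⱼ/3 + sin pⱼ · sin²qⱼ (1 ≤ j ≤ m) are first integrals of the ODE system on 𝕋^{2n+2m+2}: φ̇ᵢ = ωᵢ cos uᵢ + sin x · sin 2uᵢ, u̇ᵢ = 0, ẏ = (Σᵢ sin²uᵢ + sin²x + sin²y) cos x, ẋ = −sin x · sin 2y, q̇ⱼ = (sin²pⱼ + sin²qⱼ) cos pⱼ, ṗⱼ = −sin pⱼ · sin 2qⱼ: each is constant along every solution. Moreover, at every point of the torus 𝒯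 = {u = 0, x = y = 0, p = q = 0} one has dĤ = Σᵢ ωᵢ cos uᵢ duᵢ = Σᵢ ωᵢ duᵢ and dF̂ⱼ = 0. -/
open Real

/-- The Hamilton function of the compactified system on 𝕋^{2n+2m+2}:
`Ĥ = Σᵢ(ωᵢ sin uᵢ + sin x · sin²uᵢ) + sin³x/3 + sin x · sin²y
 + Σⱼ(sin³pⱼ/3 + sin pⱼ · sin²qⱼ)` (all coordinates angular, real lifts). -/
noncomputable def Hhat (n m : ℕ) (ω : Fin n → ℝ)
    (u : Fin n → ℝ) (x y : ℝ) (p q : Fin m → ℝ) : ℝ :=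
  (∑ i, (ω i * Real.sin (u i) + Real.sin x * Real.sin (u i) ^ 2))
    + Real.sin x ^ 3 / 3 + Real.sin x * Real.sin y ^ 2
    + ∑ j, (Real.sin (p j) ^ 3 / 3 + Real.sin (p j) * Real.sin (q j) ^ 2)

/-- The integrals `F̂ⱼ = sin³pⱼ/3 + sin pⱼ · sin²qⱼ` of the compactified system. -/
noncomputable def Fhat (m : ℕ) (j : Fin m) (p q : Fin m → ℝ) : ℝ :=
  Real.sin (p j) ^ 3 / 3 + Real.sin (p j) * Real.sin (q j) ^ 2

/-- Constancy of the basic two-dimensional integral. -/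
lemma aux_const (S : ℝ) (x y : ℝ → ℝ)
    (hy : ∀ t, HasDerivAt y ((S + Real.sin (x t) ^ 2 + Real.sin (y t) ^ 2) * Real.cos (x t)) t)
    (hx : ∀ t, HasDerivAt x (-(Real.sin (x t) * Real.sin (2 * y t))) t) (t : ℝ) :
    Real.sin (x t) * S + Real.sin (x t) ^ 3 / 3 + Real.sin (x t) * Real.sin (y t) ^ 2
     = Real.sin (x 0) * S + Real.sin (x 0) ^ 3 / 3 + Real.sin (x 0) * Real.sin (y 0) ^ 2 := by
  have h : ∀ t, HasDerivAt (fun t => Real.sin (x t) * S + Real.sin (x t) ^ 3 / 3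
      + Real.sin (x t) * Real.sin (y t) ^ 2) 0 t := by
    intro t
    have h1 := (hx t).sin
    have h2 := (hy t).sin
    have := ((h1.mul_const S).add ((h1.fun_pow 3).div_const 3)).add (h1.mul (h2.fun_pow 2))
    refine this.congr_deriv ?_
    rw [Real.sin_two_mul]
    simp
    ring
  exact is_const_of_deriv_eq_zero (fun t => (h t).differentiableAt) (fun t => (h t).deriv) t 0

lemma aux_F {P Q : ℝ → ℝ} {P' Q' t : ℝ} (hP : HasDerivAt P P' t) (hQ : HasDerivAt Q Q' t)
    (sP : Real.sin (P t) = 0) (sQ : Real.sin (Q t) = 0) :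
    HasDerivAt (fun s => Real.sin (P s) ^ 3 / 3 + Real.sin (P s) * Real.sin (Q s) ^ 2) 0 t := by
  have := ((hP.sin.fun_pow 3).div_const 3).add (hP.sin.mul (hQ.sin.fun_pow 2))
  refine this.congr_deriv ?_
  simp [sP, sQ]

/-- Derivative of `Hhat` along a curve through a point of the torus. -/
lemma aux_H {n m : ℕ} (ω : Fin n → ℝ) {u : ℝ → Fin n → ℝ} {x y : ℝ → ℝ} {p q : ℝ → Fin m → ℝ}
    {u' : Fin n → ℝ} {x' y' : ℝ} {p' q' : Fin m → ℝ} {t : ℝ}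
    (hu : HasDerivAt u u' t) (hx : HasDerivAt x x' t) (hy : HasDerivAt y y' t)
    (hp : HasDerivAt p p' t) (hq : HasDerivAt q q' t)
    (su : ∀ i, Real.sin (u t i) = 0)
    (sx : Real.sin (x t) = 0) (sy : Real.sin (y t) = 0)
    (sp : ∀ i, Real.sin (p t i) = 0) (sq : ∀ i, Real.sin (q t i) = 0) :
    HasDerivAt (fun s => Hhat n m ω (u s) (x s) (y s) (p s) (q s))
      (∑ i, ω i * Real.cos (u t i) * u' i) t := by
  rw [hasDerivAt_pi] at hu hp hq
  have h1 : HasDerivAt (fun s => ∑ i, (ω i * Real.sin (u s i) + Real.sin (x s) * Real.sin (u s i) ^ 2))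
      (∑ i, ω i * Real.cos (u t i) * u' i) t := by
    refine HasDerivAt.fun_sum fun i _ => ?_
    have := ((hu i).sin.const_mul (ω i)).add (hx.sin.mul ((hu i).sin.fun_pow 2))
    refine this.congr_deriv ?_
    simp [su i, sx, mul_assoc]
  have h2 := aux_F hx hy sx sy
  have h3 : HasDerivAt (fun s => ∑ j, (Real.sin (p s j) ^ 3 / 3
      + Real.sin (p s j) * Real.sin (q s j) ^ 2)) (∑ _j : Fin m, (0 : ℝ)) t :=
    HasDerivAt.fun_sum fun j _ => aux_F (hp j) (hq j) (sp j) (sq j)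
  have h4 := (h1.add h2).add h3
  simp only [Finset.sum_const_zero, add_zero] at h4
  refine h4.congr_of_eventuallyEq (Filter.Eventually.of_forall fun s => ?_)
  simp only [Hhat, Pi.add_apply]
  ring

/-- **First integrals and degeneracy relations for the compactified system** on
M̂ = 𝕋^{2n+2m+2}: `φ̇ᵢ = ωᵢ cos uᵢ + sin x · sin 2uᵢ, u̇ᵢ = 0,
ẏ = (Σᵢ sin²uᵢ + sin²x + sin²y) cos x, ẋ = −sin x · sin 2y,
q̇ⱼ = (sin²pⱼ + sin²qⱼ) cos pⱼ, ṗⱼ = −sin pⱼ · sin 2qⱼ`.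
(1) The n + m + 1 functions `Ĥ`, `sin uᵢ` (1 ≤ i ≤ n) and `F̂ⱼ` (1 ≤ j ≤ m) are
constant along every solution. (2) At every point of the torus
𝒯 = {u = 0, x = y = 0, p = q = 0} (i.e., at every real lift whose coordinates
are all ≡ 0 mod 2π) one has `dĤ = Σᵢ ωᵢ duᵢ` (the uᵢ-partial derivatives of `Ĥ`
equal `ωᵢ cos uᵢ = ωᵢ` and all its other partial derivatives vanish) and
`dF̂ⱼ = 0` (all partial derivatives of each `F̂ⱼ` vanish). -/
theorem compact_first_integrals_and_degeneracy
    (n m : ℕ) (hn : 1 ≤ n) (ω : Fin n → ℝ) :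
    -- (1) first integrals
    (∀ (u φ : ℝ → Fin n → ℝ) (x y : ℝ → ℝ) (p q : ℝ → Fin m → ℝ),
      (∀ t i, HasDerivAt (fun s => φ s i)
        (ω i * Real.cos (u t i) + Real.sin (x t) * Real.sin (2 * u t i)) t) →
      (∀ t i, HasDerivAt (fun s => u s i) 0 t) →
      (∀ t, HasDerivAt y
        (((∑ i, Real.sin (u t i) ^ 2) + Real.sin (x t) ^ 2 + Real.sin (y t) ^ 2)
          * Real.cos (x t)) t) →
      (∀ t, HasDerivAt x (-(Real.sin (x t) * Real.sin (2 * y t))) t) →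
      (∀ t j, HasDerivAt (fun s => q s j)
        ((Real.sin (p t j) ^ 2 + Real.sin (q t j) ^ 2) * Real.cos (p t j)) t) →
      (∀ t j, HasDerivAt (fun s => p s j)
        (-(Real.sin (p t j) * Real.sin (2 * q t j))) t) →
      ∀ t : ℝ,
        Hhat n m ω (u t) (x t) (y t) (p t) (q t)
          = Hhat n m ω (u 0) (x 0) (y 0) (p 0) (q 0) ∧
        (∀ i, Real.sin (u t i) = Real.sin (u 0 i)) ∧
        (∀ j, Fhat m j (p t) (q t) = Fhat m j (p 0) (q 0))) ∧
    -- (2) degeneracy relations at every point of the torus 𝒯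
    (∀ (u : Fin n → ℝ) (x y : ℝ) (p q : Fin m → ℝ),
      (∀ i, ∃ k : ℤ, u i = 2 * π * k) → (∃ k : ℤ, x = 2 * π * k) →
      (∃ k : ℤ, y = 2 * π * k) → (∀ j, ∃ k : ℤ, p j = 2 * π * k) →
      (∀ j, ∃ k : ℤ, q j = 2 * π * k) →
      (∀ i, deriv (fun s => Hhat n m ω (Function.update u i s) x y p q) (u i)
          = ω i * Real.cos (u i) ∧ ω i * Real.cos (u i) = ω i) ∧
      deriv (fun s => Hhat n m ω u s y p q) x = 0 ∧
      deriv (fun s => Hhat n m ω u x s p q) y = 0 ∧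
      (∀ j, deriv (fun s => Hhat n m ω u x y (Function.update p j s) q) (p j) = 0) ∧
      (∀ j, deriv (fun s => Hhat n m ω u x y p (Function.update q j s)) (q j) = 0) ∧
      (∀ j j', deriv (fun s => Fhat m j (Function.update p j' s) q) (p j') = 0) ∧
      (∀ j j', deriv (fun s => Fhat m j p (Function.update q j' s)) (q j') = 0)) := by
  refine ⟨?_, ?_⟩
  · intro u φ x y p q _ hu hy hx hq hp t
    have cu : ∀ t i, u t i = u 0 i := fun t i =>
      is_const_of_deriv_eq_zero (f := fun s => u s i)
        (fun t => (hu t i).differentiableAt) (fun t => (hu t i).deriv) t 0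
    have cF : ∀ j, Fhat m j (p t) (q t) = Fhat m j (p 0) (q 0) := by
      intro j
      have := aux_const 0 (fun s => p s j) (fun s => q s j)
        (fun t => by simpa using hq t j) (fun t => hp t j) t
      simpa [Fhat] using this
    refine ⟨?_, fun i => by rw [cu t i], cF⟩
    have cK := aux_const (∑ i, Real.sin (u 0 i) ^ 2) x y
      (fun t => by simpa only [cu t] using hy t) hx t
    have cS : ∑ j, Fhat m j (p t) (q t) = ∑ j, Fhat m j (p 0) (q 0) :=
      Finset.sum_congr rfl fun j _ => cF j
    simp only [Fhat] at cS
    simp only [Hhat, cu t, cS, Finset.sum_add_distrib, ← Finset.mul_sum] at cK ⊢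
    linarith
  · intro u x y p q hu hx hy hp hq
    have sz : ∀ a : ℝ, (∃ k : ℤ, a = 2 * π * k) → Real.sin a = 0 ∧ Real.cos a = 1 := by
      rintro a ⟨k, rfl⟩
      refine ⟨?_, ?_⟩
      · rw [Real.sin_eq_zero_iff]
        exact ⟨2 * k, by push_cast; ring⟩
      · rw [mul_comm]
        exact Real.cos_int_mul_two_pi k
    have su := fun i => (sz _ (hu i)).1
    have sp := fun i => (sz _ (hp i)).1
    have sq := fun i => (sz _ (hq i)).1
    have sx := (sz _ hx).1
    have sy := (sz _ hy).1
    refine ⟨fun i => ⟨?_, by rw [(sz _ (hu i)).2, mul_one]⟩, ?_, ?_, fun j => ?_, fun j => ?_,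
      fun j j' => ?_, fun j j' => ?_⟩
    · have := (aux_H ω (hasDerivAt_update u i (u i)) (hasDerivAt_const _ x) (hasDerivAt_const _ y)
        (hasDerivAt_const _ p) (hasDerivAt_const _ q) (by simpa using su) sx sy sp sq).deriv
      rw [this]
      simp [Pi.single_apply]
    · have := (aux_H ω (hasDerivAt_const _ u) (hasDerivAt_id' x) (hasDerivAt_const _ y)
        (hasDerivAt_const _ p) (hasDerivAt_const _ q) su sx sy sp sq).deriv
      simpa using this
    · have := (aux_H ω (hasDerivAt_const _ u) (hasDerivAt_const _ x) (hasDerivAt_id' y)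
        (hasDerivAt_const _ p) (hasDerivAt_const _ q) su sx sy sp sq).deriv
      simpa using this
    · have := (aux_H ω (hasDerivAt_const _ u) (hasDerivAt_const _ x) (hasDerivAt_const _ y)
        (hasDerivAt_update p j (p j)) (hasDerivAt_const _ q) su sx sy (by simpa using sp) sq).deriv
      simpa using this
    · have := (aux_H ω (hasDerivAt_const _ u) (hasDerivAt_const _ x) (hasDerivAt_const _ y)
        (hasDerivAt_const _ p) (hasDerivAt_update q j (q j)) su sx sy sp (by simpa using sq)).deriv
      simpa using this
    · exact (aux_F (P := fun s => Function.update p j' s j) (Q := fun _ => q j)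
        (hasDerivAt_pi.1 (hasDerivAt_update p j' (p j')) j)
        (hasDerivAt_const _ (q j)) (by simpa using sp j) (sq j)).deriv
    · exact (aux_F (P := fun _ => p j) (Q := fun s => Function.update q j' s j)
        (hasDerivAt_const _ (p j)) (hasDerivAt_pi.1 (hasDerivAt_update q j' (q j')) j)
        (sp j) (by simpa using sq j)).deriv
end

section
/- Consider the ODE system on the torus 𝕋^{2n+2m+2}: φ̇ᵢ = ωᵢ cos uᵢ + sin x · sin 2uᵢ, u̇ᵢ = 0, ẏ = (Σᵢ sin²uᵢ + sin²x + sin²y) cos x, ẋ = −sin x · sin 2y, q̇ⱼ = (sin²pⱼ + sin²qⱼ) cos pⱼ, ṗⱼ = −sin pⱼ · sin 2qⱼ. For any u⁰ ∈ ℝⁿ with ζ := Σᵢ sin²u⁰ᵢ > 0, the (n+1)-torus {u = u⁰, x = 0, p = q = 0} (with angular coordinates (φ, y)) is invariant under this system, and the induced flow on it is given by φ̇ᵢ = ωᵢ cos u⁰ᵢ and ẏ = ζ + sin²y. In particular, any neighborhood of the torus 𝒯 = {u = 0, x = y = 0, p = q = 0} intersects such invariant (n+1)-tori with u⁰ ≠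 0 arbitrarily close to 0. -/
open Real

theorem eq_zero_of_deriv_bound (f f' : ℝ → ℝ) (hf : ∀ t, HasDerivAt f (f' t) t)
    (hb : ∀ t, |f' t| ≤ |f t|) (h0 : f 0 = 0) : ∀ t, f t = 0 := by
  have hl : ∀ t, LipschitzOnWith 1 (fun z : ℝ => (f' t / f t) * z) Set.univ := by
    intro t
    refine LipschitzOnWith.of_dist_le_mul ?_
    intro a _ b _
    rw [Real.dist_eq, Real.dist_eq, ← mul_sub, abs_mul]
    refine mul_le_mul_of_nonneg_right ?_ (abs_nonneg _)
    rw [abs_div]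
    exact div_le_one_of_le₀ (hb t) (abs_nonneg _)
  have h := ODE_solution_unique_univ (v := fun t z => (f' t / f t) * z)
    (s := fun _ => Set.univ) (K := 1) (t₀ := 0) (f := f) (g := fun _ => 0) hl
    (fun t => ⟨by
      have h1 : f' t / f t * f t = f' t := by
        by_cases hz : f t = 0
        · have := hb t
          rw [hz, abs_zero] at this
          rw [hz, mul_zero, abs_eq_zero.mp (le_antisymm this (abs_nonneg _))]
        · field_simp
      simpa only [h1] using hf t, Set.mem_univ _⟩)
    (fun t => ⟨by simpa using hasDerivAt_const t (0 : ℝ), Set.mem_univ _⟩) h0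
  intro t
  exact congrFun h t

theorem abs_sin_mul_sin_le (a b : ℝ) : |-(Real.sin a * Real.sin b)| ≤ |a| := by
  rw [abs_neg, abs_mul]
  calc |Real.sin a| * |Real.sin b| ≤ |a| * 1 :=
        mul_le_mul Real.abs_sin_le_abs (Real.abs_sin_le_one b) (abs_nonneg _) (abs_nonneg _)
    _ = |a| := mul_one _

/-- **Invariant (n+1)-tori accumulating on 𝒯 in the compactified system.**
Consider the system on 𝕋^{2n+2m+2} (real lifts):
`φ̇ᵢ = ωᵢ cos uᵢ + sin x · sin 2uᵢ, u̇ᵢ = 0,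
ẏ = (Σᵢ sin²uᵢ + sin²x + sin²y) cos x, ẋ = −sin x · sin 2y,
q̇ⱼ = (sin²pⱼ + sin²qⱼ) cos pⱼ, ṗⱼ = −sin pⱼ · sin 2qⱼ`.
(1) For any `u⁰` with `ζ = Σᵢ sin²u⁰ᵢ > 0`, the (n+1)-torus
`{u = u⁰, x = 0, p = q = 0}` is invariant: every solution starting on it stays
on it, the induced flow being `φᵢ(t) = φᵢ(0) + t ωᵢ cos u⁰ᵢ` and
`ẏ = ζ + sin²y`. (2) In particular, any neighborhood of the torus
𝒯 = {u = 0, x = y = 0, p = q = 0} meets such invariant tori: there are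
`u⁰ ≠ 0` arbitrarily close to `0` with `ζ > 0`. -/
theorem invariant_n_plus_one_tori
    (n m : ℕ) (hn : 1 ≤ n) (ω : Fin n → ℝ) :
    (∀ (u0 : Fin n → ℝ), 0 < (∑ i, Real.sin (u0 i) ^ 2) →
      ∀ (u φ : ℝ → Fin n → ℝ) (x y : ℝ → ℝ) (p q : ℝ → Fin m → ℝ),
      (∀ t i, HasDerivAt (fun s => φ s i)
        (ω i * Real.cos (u t i) + Real.sin (x t) * Real.sin (2 * u t i)) t) →
      (∀ t i, HasDerivAt (fun s => u s i) 0 t) →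
      (∀ t, HasDerivAt y
        (((∑ i, Real.sin (u t i) ^ 2) + Real.sin (x t) ^ 2 + Real.sin (y t) ^ 2)
          * Real.cos (x t)) t) →
      (∀ t, HasDerivAt x (-(Real.sin (x t) * Real.sin (2 * y t))) t) →
      (∀ t j, HasDerivAt (fun s => q s j)
        ((Real.sin (p t j) ^ 2 + Real.sin (q t j) ^ 2) * Real.cos (p t j)) t) →
      (∀ t j, HasDerivAt (fun s => p s j)
        (-(Real.sin (p t j) * Real.sin (2 * q t j))) t) →
      u 0 = u0 → x 0 = 0 → p 0 = 0 → q 0 = 0 →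
      ∀ t : ℝ, u t = u0 ∧ x t = 0 ∧ p t = 0 ∧ q t = 0 ∧
        (∀ i, φ t i = φ 0 i + t * (ω i * Real.cos (u0 i))) ∧
        HasDerivAt y ((∑ i, Real.sin (u0 i) ^ 2) + Real.sin (y t) ^ 2) t) ∧
    (∀ ε > (0 : ℝ), ∃ u0 : Fin n → ℝ, u0 ≠ 0 ∧ ‖u0‖ < ε ∧
      0 < (∑ i, Real.sin (u0 i) ^ 2)) := by
  constructor
  · intro u0 _ u φ x y p q hφ hu hy hx hq hp hu0 hx0 hp0 hq0
    have const : ∀ f : ℝ → ℝ, (∀ t, HasDerivAt f 0 t) → ∀ t, f t = f 0 := fun f hf t =>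
      is_const_of_deriv_eq_zero (fun s => (hf s).differentiableAt) (fun s => (hf s).deriv) t 0
    have Hu : ∀ t, u t = u0 := by
      intro t
      rw [← hu0]
      funext i
      exact const (fun s => u s i) (fun s => hu s i) t
    have Hx : ∀ t, x t = 0 :=
      eq_zero_of_deriv_bound x _ hx (fun t => abs_sin_mul_sin_le _ _) hx0
    have Hp : ∀ t, p t = 0 := by
      intro t
      funext j
      exact eq_zero_of_deriv_bound (fun s => p s j) _ (fun s => hp s j)
        (fun t => abs_sin_mul_sin_le _ _) (congrFun hp0 j) t
    have Hq : ∀ t, q t = 0 := by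
      intro t
      funext j
      refine eq_zero_of_deriv_bound (fun s => q s j) _ (fun s => hq s j)
        (fun t => ?_) (congrFun hq0 j) t
      have := abs_sin_mul_sin_le (q t j) (q t j)
      rw [abs_neg] at this
      simpa [Hp t, pow_two] using this
    intro t
    refine ⟨Hu t, Hx t, Hp t, Hq t, ?_, ?_⟩
    · intro i
      have := const (fun s => φ s i - s * (ω i * Real.cos (u0 i))) (fun s => by
        have h1 := (hφ s i).sub ((hasDerivAt_id s).mul_const (ω i * Real.cos (u0 i)))
        rw [Hu s, Hx s, Real.sin_zero, zero_mul, add_zero, one_mul, sub_self] at h1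
        exact h1) t
      simp only [zero_mul, sub_zero] at this
      linarith
    · have h1 := hy t
      simpa [Hu, Hx] using h1
  · intro ε hε
    have hd : 0 < min (ε / 2) 1 := by positivity
    have h1 : min (ε / 2) 1 < ε := lt_of_le_of_lt (min_le_left _ _) (by linarith)
    have hs : 0 < Real.sin (min (ε / 2) 1) :=
      Real.sin_pos_of_pos_of_le_one hd (min_le_right _ _)
    refine ⟨fun _ => min (ε / 2) 1, ?_, ?_, ?_⟩
    · intro h
      have := congrFun h ⟨0, hn⟩
      exact hd.ne' this
    · rw [pi_norm_lt_iff hε]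
      intro i
      rw [Real.norm_eq_abs, abs_of_pos hd]
      exact h1
    · have : Nonempty (Fin n) := ⟨⟨0, hn⟩⟩
      exact Finset.sum_pos (fun _ _ => by positivity) Finset.univ_nonempty
end

section
/- Consider the ODE system on 𝒦 = 𝕋ⁿ × ℝ^{ℓ+m+1}: φ̇ᵢ = ωᵢ, v̇ₖ = 0, ẏ = Σₖvₖ² + y² + Σⱼqⱼ², q̇ⱼ = 0. Let z : ℝ → 𝒦 be a solution whose orbit is recurrent, in the sense that there exists a sequence of times t_k → +∞ with z(t_k) → z(0). Then z(0) satisfies v = 0, y = 0, q = 0. Consequently the torus {v = 0, y = 0, q = 0} is the unique Kronecker n-torus of this system in the whole phase space. -/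
open Real Filter Topology

/-- **Uniqueness of the Kronecker n-torus of the reversible system**
`φ̇ᵢ = ωᵢ, v̇ₖ = 0, ẏ = Σₖvₖ² + y² + Σⱼqⱼ², q̇ⱼ = 0` on 𝒦 = 𝕋ⁿ × ℝ^{ℓ+m+1}
(the angles φ represented by their real lifts and compared in
ℝ/2πℤ = `AddCircle (2π)`). If a solution is recurrent — there is a sequence of
times `tₖ → +∞` along which the solution returns to its initial point — then the
initial point satisfies `v = 0, y = 0, q = 0`. Consequently the torus
{v = 0, y = 0, q = 0} is the unique Kronecker n-torus of this system in the
whole phase space. -/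
theorem unique_kronecker_torus_reversible
    (n l m : ℕ) (ω : Fin n → ℝ)
    (φ : ℝ → Fin n → ℝ) (v : ℝ → Fin l → ℝ) (y : ℝ → ℝ) (q : ℝ → Fin m → ℝ)
    (hφ : ∀ t i, HasDerivAt (fun s => φ s i) (ω i) t)
    (hv : ∀ t k, HasDerivAt (fun s => v s k) 0 t)
    (hy : ∀ t, HasDerivAt y
      ((∑ k, (v t k) ^ 2) + (y t) ^ 2 + ∑ j, (q t j) ^ 2) t)
    (hq : ∀ t j, HasDerivAt (fun s => q s j) 0 t)
    (tk : ℕ → ℝ) (htk : Tendsto tk atTop atTop)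
    (hrecv : Tendsto (fun k => v (tk k)) atTop (𝓝 (v 0)))
    (hrecy : Tendsto (fun k => y (tk k)) atTop (𝓝 (y 0)))
    (hrecq : Tendsto (fun k => q (tk k)) atTop (𝓝 (q 0)))
    (hrecφ : ∀ i, Tendsto (fun k => ((φ (tk k) i : ℝ) : AddCircle (2 * π)))
      atTop (𝓝 ((φ 0 i : ℝ) : AddCircle (2 * π)))) :
    v 0 = 0 ∧ y 0 = 0 ∧ q 0 = 0 := by
  have hmono : Monotone y := by
    refine monotone_of_deriv_nonneg (fun t => (hy t).differentiableAt) (fun t => ?_)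
    rw [(hy t).deriv]
    positivity
  have hconst : ∀ t, 0 ≤ t → y t = y 0 := by
    intro t ht
    refine le_antisymm ?_ (hmono ht)
    refine ge_of_tendsto hrecy ?_
    filter_upwards [htk.eventually_ge_atTop t] with k hk
    exact hmono hk
  have hvc : ∀ k, v 1 k = v 0 k := fun k =>
    is_const_of_deriv_eq_zero (fun t => (hv t k).differentiableAt) (fun t => (hv t k).deriv) 1 0
  have hqc : ∀ k, q 1 k = q 0 k := fun k =>
    is_const_of_deriv_eq_zero (fun t => (hq t k).differentiableAt) (fun t => (hq t k).deriv) 1 0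
  have hev : y =ᶠ[𝓝 1] fun _ => y 0 := by
    filter_upwards [lt_mem_nhds (zero_lt_one (α := ℝ))] with t ht
    exact hconst t ht.le
  have hz := (hy 1).unique ((hasDerivAt_const (1 : ℝ) (y 0)).congr_of_eventuallyEq hev)
  simp only [hvc, hqc, hconst 1 zero_le_one] at hz
  have h1 : 0 ≤ ∑ k, (v 0 k) ^ 2 := by positivity
  have h2 : 0 ≤ ∑ j, (q 0 j) ^ 2 := by positivity
  have h3 : 0 ≤ (y 0) ^ 2 := by positivity
  have e1 : ∑ k, (v 0 k) ^ 2 = 0 := by linarith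
  have e2 : ∑ j, (q 0 j) ^ 2 = 0 := by linarith
  have e3 : (y 0) ^ 2 = 0 := by linarith
  refine ⟨?_, pow_eq_zero_iff two_ne_zero |>.mp e3, ?_⟩
  · funext k
    have := (Finset.sum_eq_zero_iff_of_nonneg (fun i _ => sq_nonneg (v 0 i))).mp e1 k
      (Finset.mem_univ k)
    simpa using this
  · funext k
    have := (Finset.sum_eq_zero_iff_of_nonneg (fun i _ => sq_nonneg (q 0 i))).mp e2 k
      (Finset.mem_univ k)
    simpa using this
end

section
/- Consider the ODE system on the torus 𝒦̂ = 𝕋^{n+ℓ+m+1} with angular coordinates (φ₁,…,φₙ, v₁,…,v_ℓ, y, q₁,…,qₘ): φ̇ᵢ = ωᵢ, v̇ₖ = 0, ẏ = Σₖ sin²vₖ + sin²y + Σⱼ sin²qⱼ, q̇ⱼ = 0. This system is reversible with respect to the involution G : (φ, v, y, q) ↦ (−φ, v, −y, −q). If a solution z : ℝ → 𝒦̂ is entirely contained in the domain {−π < vₖ < π (1 ≤ k ≤ ℓ), −π < y < π, −π < qⱼ < π (1 ≤ j ≤ m)} (modulo 2π) and is recurrent (there is a sequence t_k → +∞ with z(t_k)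 → z(0)), then z(0) lies on the n-torus {v = 0, y = 0, q = 0}. Consequently this symmetric Kronecker n-torus with frequency vector ω is isolated: it is the only Kronecker torus entirely contained in that domain. -/
open Real Filter Topology

theorem hasDerivAt_rev {g : ℝ → ℝ} {c t : ℝ} (h : HasDerivAt g c (-t)) :
    HasDerivAt (fun s => g (-s)) (-c) t := by
  have h2 : HasDerivAt (fun s => g (-s)) (c * (-1)) t :=
    HasDerivAt.comp t h (hasDerivAt_neg t)
  rwa [mul_neg_one] at h2

theorem hasDerivAt_neg_rev {g : ℝ → ℝ} {c t : ℝ} (h : HasDerivAt g c (-t)) :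
    HasDerivAt (fun s => -g (-s)) c t := by
  have h2 : HasDerivAt (fun s => -g (-s)) (-(-c)) t := (hasDerivAt_rev h).neg
  rwa [neg_neg] at h2

theorem coe_zero_of_sin {x : ℝ} (h : Real.sin x = 0)
    (hx : ∃ a : ℤ, x - 2 * π * a ∈ Set.Ioo (-π) π) : ((x : ℝ) : AddCircle (2 * π)) = 0 := by
  obtain ⟨a, h1, h2⟩ := hx
  have h3 : Real.sin (x - 2 * π * a) = 0 := by
    have := Real.sin_sub_int_mul_two_pi x a
    rw [show 2 * π * (a : ℝ) = a * (2 * π) by ring, this, h]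
  have h4 := (Real.sin_eq_zero_iff_of_lt_of_lt h1 h2).1 h3
  rw [AddCircle.coe_eq_zero_iff]
  refine ⟨a, ?_⟩
  rw [zsmul_eq_mul]; linarith

theorem deriv_zero_of_recurrent (y f : ℝ → ℝ) (hy : ∀ t, HasDerivAt y (f t) t)
    (hf : ∀ t, 0 ≤ f t) (hd : ∀ t, ∃ a : ℤ, y t - 2 * π * a ∈ Set.Ioo (-π) π)
    (tk : ℕ → ℝ) (htk : Tendsto tk atTop atTop)
    (hr : Tendsto (fun k => ((y (tk k) : ℝ) : AddCircle (2 * π)))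
        atTop (𝓝 ((y 0 : ℝ) : AddCircle (2 * π)))) : f 0 = 0 := by
  have hpi := Real.pi_pos
  have hmono : Monotone y := monotone_of_hasDerivAt_nonneg hy hf
  have hcont : Continuous y := continuous_iff_continuousAt.2 fun t => (hy t).continuousAt
  obtain ⟨a, ha1, ha2⟩ := hd 0
  have hb : ∀ t, y t ≤ 2 * π * a + π := by
    intro t
    by_contra! hc
    have h0 : 0 ≤ t := by
      by_contra! h
      have := hmono h.le
      linarith
    obtain ⟨s, -, hs⟩ := intermediate_value_Icc h0 hcont.continuousOn
      (show 2 * π * a + π ∈ Set.Icc (y 0) (y t) from ⟨by linarith, hc.le⟩)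
    obtain ⟨b, hb1, hb2⟩ := hd s
    rw [hs] at hb1 hb2
    have e1 : (a : ℝ) - b < 0 := by
      by_contra! h
      nlinarith
    have e2 : (-1 : ℝ) < a - b := by
      by_contra! h
      nlinarith
    have e3 : a - b < 0 := by exact_mod_cast e1
    have e4 : -1 < a - b := by exact_mod_cast e2
    omega
  have hbdd : BddAbove (Set.range y) := ⟨_, by rintro _ ⟨t, rfl⟩; exact hb t⟩
  have hlim := tendsto_atTop_ciSup hmono hbdd
  set L := ⨆ t, y t with hL
  have hle : ∀ t, y t ≤ L := fun t => le_ciSup hbdd t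
  have hLb : L ≤ 2 * π * a + π := ciSup_le hb
  have hc : Tendsto (fun k => ((y (tk k) : ℝ) : AddCircle (2 * π))) atTop
      (𝓝 ((L : ℝ) : AddCircle (2 * π))) :=
    ((AddCircle.continuous_mk' (2 * π)).tendsto L).comp (hlim.comp htk)
  have : Fact (0 < 2 * π) := ⟨by positivity⟩
  have heq := tendsto_nhds_unique hc hr
  have hz : (((L - y 0 : ℝ)) : AddCircle (2 * π)) = 0 := by
    rw [AddCircle.coe_sub, heq, sub_self]
  obtain ⟨k, hk⟩ := (AddCircle.coe_eq_zero_iff _).1 hz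
  rw [zsmul_eq_mul] at hk
  have hl0 := hle 0
  have e1 : (k : ℝ) < 1 := by
    by_contra! h
    nlinarith
  have e2 : (-1 : ℝ) < k := by
    by_contra! h
    nlinarith
  have e3 : k < 1 := by exact_mod_cast e1
  have e4 : -1 < k := by exact_mod_cast e2
  have hk0 : k = 0 := by omega
  subst hk0
  have hLy : L = y 0 := by simp at hk; linarith
  have hconst : ∀ t ∈ Set.Ici (0 : ℝ), y t = y 0 := fun t ht =>
    le_antisymm (hLy ▸ hle t) (hmono ht)
  have d1 : HasDerivWithinAt y (f 0) (Set.Ici 0) 0 := (hy 0).hasDerivWithinAt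
  have d2 : HasDerivWithinAt y 0 (Set.Ici 0) 0 :=
    (hasDerivWithinAt_const (0 : ℝ) (Set.Ici 0) (y 0)).congr hconst rfl
  exact (uniqueDiffWithinAt_Ici (0 : ℝ)).eq_deriv _ d1 d2

/-- **Isolatedness of the symmetric Kronecker n-torus of the compactified
reversible system** `φ̇ᵢ = ωᵢ, v̇ₖ = 0, ẏ = Σₖ sin²vₖ + sin²y + Σⱼ sin²qⱼ,
q̇ⱼ = 0` on 𝒦̂ = 𝕋^{n+ℓ+m+1} (all coordinates angular, represented by real lifts
and compared in ℝ/2πℤ = `AddCircle (2π)`).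
(1) The system is reversible with respect to the involution
`G : (φ, v, y, q) ↦ (−φ, v, −y, −q)`: whenever `(φ, v, y, q)` is a solution, so
is `t ↦ (−φ(−t), v(−t), −y(−t), −q(−t))`.
(2) If a solution is entirely contained (mod 2π) in the domain
`{−π < vₖ < π, −π < y < π, −π < qⱼ < π}` and is recurrent (there is a sequence
of times `tₖ → +∞` along which it returns to its initial point), then its
initial point lies on the n-torus {v = 0, y = 0, q = 0}. Consequently this
symmetric Kronecker n-torus with frequency vector ω is isolated: it is the only
Kronecker torus entirely contained in that domain. -/
theorem isolated_symmetric_kronecker_torus_compact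
    (n l m : ℕ) (ω : Fin n → ℝ) :
    -- (1) reversibility with respect to G : (φ, v, y, q) ↦ (−φ, v, −y, −q)
    (∀ (φ : ℝ → Fin n → ℝ) (v : ℝ → Fin l → ℝ) (y : ℝ → ℝ) (q : ℝ → Fin m → ℝ),
      (∀ t i, HasDerivAt (fun s => φ s i) (ω i) t) →
      (∀ t k, HasDerivAt (fun s => v s k) 0 t) →
      (∀ t, HasDerivAt y ((∑ k, Real.sin (v t k) ^ 2) + Real.sin (y t) ^ 2
        + ∑ j, Real.sin (q t j) ^ 2) t) →
      (∀ t j, HasDerivAt (fun s => q s j) 0 t) →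
      ((∀ t i, HasDerivAt (fun s => -φ (-s) i) (ω i) t) ∧
       (∀ t k, HasDerivAt (fun s => v (-s) k) 0 t) ∧
       (∀ t, HasDerivAt (fun s => -y (-s))
         ((∑ k, Real.sin (v (-t) k) ^ 2) + Real.sin (-y (-t)) ^ 2
           + ∑ j, Real.sin (-q (-t) j) ^ 2) t) ∧
       (∀ t j, HasDerivAt (fun s => -q (-s) j) 0 t))) ∧
    -- (2) a recurrent solution in the domain lies on the torus {v = 0, y = 0, q = 0}
    (∀ (φ : ℝ → Fin n → ℝ) (v : ℝ → Fin l → ℝ) (y : ℝ → ℝ) (q : ℝ → Fin m → ℝ),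
      (∀ t i, HasDerivAt (fun s => φ s i) (ω i) t) →
      (∀ t k, HasDerivAt (fun s => v s k) 0 t) →
      (∀ t, HasDerivAt y ((∑ k, Real.sin (v t k) ^ 2) + Real.sin (y t) ^ 2
        + ∑ j, Real.sin (q t j) ^ 2) t) →
      (∀ t j, HasDerivAt (fun s => q s j) 0 t) →
      -- containment in the domain, mod 2π
      (∀ t k, ∃ a : ℤ, v t k - 2 * π * a ∈ Set.Ioo (-π) π) →
      (∀ t, ∃ a : ℤ, y t - 2 * π * a ∈ Set.Ioo (-π) π) →
      (∀ t j, ∃ a : ℤ, q t j - 2 * π * a ∈ Set.Ioo (-π) π) →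
      -- recurrence
      ∀ tk : ℕ → ℝ, Tendsto tk atTop atTop →
      (∀ i, Tendsto (fun k => ((φ (tk k) i : ℝ) : AddCircle (2 * π)))
        atTop (𝓝 ((φ 0 i : ℝ) : AddCircle (2 * π)))) →
      (∀ k', Tendsto (fun k => ((v (tk k) k' : ℝ) : AddCircle (2 * π)))
        atTop (𝓝 ((v 0 k' : ℝ) : AddCircle (2 * π)))) →
      Tendsto (fun k => ((y (tk k) : ℝ) : AddCircle (2 * π)))
        atTop (𝓝 ((y 0 : ℝ) : AddCircle (2 * π))) →
      (∀ j, Tendsto (fun k => ((q (tk k) j : ℝ) : AddCircle (2 * π)))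
        atTop (𝓝 ((q 0 j : ℝ) : AddCircle (2 * π)))) →
      ((∀ k', ((v 0 k' : ℝ) : AddCircle (2 * π)) = 0) ∧
       ((y 0 : ℝ) : AddCircle (2 * π)) = 0 ∧
       (∀ j, ((q 0 j : ℝ) : AddCircle (2 * π)) = 0))) := by
  constructor
  · intro φ v y q hφ hv hy hq
    refine ⟨fun t i => ?_, fun t k => ?_, fun t => ?_, fun t j => ?_⟩
    · exact hasDerivAt_neg_rev (hφ (-t) i)
    · have h2 := hasDerivAt_rev (hv (-t) k)
      rwa [neg_zero] at h2
    · simp only [Real.sin_neg, neg_sq]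
      exact hasDerivAt_neg_rev (hy (-t))
    · exact hasDerivAt_neg_rev (hq (-t) j)
  · intro φ v y q _ _ hy _ dv dy dq tk htk _ _ ry _
    have hS : ∀ t, 0 ≤ ∑ k, Real.sin (v t k) ^ 2 := fun t =>
      Finset.sum_nonneg fun _ _ => sq_nonneg _
    have hQ : ∀ t, 0 ≤ ∑ j, Real.sin (q t j) ^ 2 := fun t =>
      Finset.sum_nonneg fun _ _ => sq_nonneg _
    have h0 := deriv_zero_of_recurrent y _ hy
      (fun t => by have := hS t; have := hQ t; positivity) dy tk htk ry
    have h1 := hS 0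
    have h2 := hQ 0
    have h3 := sq_nonneg (Real.sin (y 0))
    have z1 : ∑ k, Real.sin (v 0 k) ^ 2 = 0 := by linarith
    have z2 : ∑ j, Real.sin (q 0 j) ^ 2 = 0 := by linarith
    have z3 : Real.sin (y 0) ^ 2 = 0 := by linarith
    rw [Finset.sum_eq_zero_iff_of_nonneg fun _ _ => sq_nonneg _] at z1 z2
    exact ⟨fun k => coe_zero_of_sin (pow_eq_zero_iff two_ne_zero |>.1 (z1 k (Finset.mem_univ k)))
        (dv 0 k), coe_zero_of_sin (pow_eq_zero_iff two_ne_zero |>.1 z3) (dy 0),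
      fun j => coe_zero_of_sin (pow_eq_zero_iff two_ne_zero |>.1 (z2 j (Finset.mem_univ j)))
        (dq 0 j)⟩
end

section
/- Consider the ODE system on the torus 𝒦̂ = 𝕋^{n+ℓ+m+1}: φ̇ᵢ = ωᵢ, v̇ₖ = 0, ẏ = Σₖ sin²vₖ + sin²y + Σⱼ sin²qⱼ, q̇ⱼ = 0. For any v⁰ ∈ ℝ^ℓ with ξ := Σₖ sin²v⁰ₖ > 0, the (n+1)-torus {v = v⁰, q = 0} (with angular coordinates (φ, y)) is invariant, and the induced flow on it is φ̇ᵢ = ωᵢ, ẏ = ξ + sin²y; the y-motion advances by 2π in time 2π/√(ξ(ξ+1)), so this invariant torus is a Kronecker (n+1)-torus with frequency vector (ω₁, …, ωₙ, √(ξ(ξ+1))). Moreover, for each δ₁,…,δ_{ℓ+m+1} ∈ {0, π}, the n-torus {vₖ = δₖ, y = δ_{ℓ+1}, qⱼ = δ_{ℓ+1+j}} is a symmetric Kronecker n-torus with frequency vector ω. -/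
open Real


lemma const_of_deriv (f : ℝ → ℝ) (c : ℝ) (h : ∀ t, HasDerivAt f c t) (t : ℝ) :
    f t = f 0 + t * c := by
  have h2 : ∀ s, HasDerivAt (fun s => f s - s * c) 0 s := by
    intro s
    exact ((h s).sub ((hasDerivAt_id s).mul_const c)).congr_deriv (by simp)
  have := is_const_of_deriv_eq_zero (fun s => (h2 s).differentiableAt)
    (fun s => (h2 s).deriv) t 0
  simp at this
  linarith

/-- The angular coordinate straightening the flow. -/
noncomputable def angleMap (a y : ℝ) : ℝ :=
  y + Real.arctan ((a - 1) * (Real.sin y * Real.cos y) / (Real.cos y ^ 2 + a * Real.sin y ^ 2))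

lemma angleMap_deriv (a : ℝ) (ha : 0 < a) (y : ℝ) :
    HasDerivAt (angleMap a) (a / (Real.cos y ^ 2 + a ^ 2 * Real.sin y ^ 2)) y := by
  have hsc := Real.sin_sq_add_cos_sq y
  have hpos : ∀ b : ℝ, 0 < b → 0 < Real.cos y ^ 2 + b * Real.sin y ^ 2 := by
    intro b hb
    by_cases h : Real.sin y = 0
    · rw [h] at hsc ⊢
      nlinarith
    · positivity
  have hD := hpos a ha
  have hE := hpos (a ^ 2) (by positivity)
  have h1 := ((Real.hasDerivAt_sin y).mul (Real.hasDerivAt_cos y)).const_mul (a - 1)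
  have h2 := ((Real.hasDerivAt_cos y).pow 2).add (((Real.hasDerivAt_sin y).pow 2).const_mul a)
  have h3 := (hasDerivAt_id y).add (h1.div h2 hD.ne').arctan
  refine h3.congr_deriv ?_
  simp only [Pi.add_apply, Pi.mul_apply, Pi.pow_apply, Pi.div_apply]
  generalize Real.sin y = s at *
  generalize Real.cos y = c at *
  have hN : (c ^ 2 + a * s ^ 2) ^ 2 + ((a - 1) * (s * c)) ^ 2 = c ^ 2 + a ^ 2 * s ^ 2 := by
    have : (c ^ 2 + a * s ^ 2) ^ 2 + ((a - 1) * (s * c)) ^ 2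
      = (s ^ 2 + c ^ 2) * (c ^ 2 + a ^ 2 * s ^ 2) := by ring
    rw [this, hsc, one_mul]
  have hq : 1 + ((a - 1) * (s * c) / (c ^ 2 + a * s ^ 2)) ^ 2
      = (c ^ 2 + a ^ 2 * s ^ 2) / (c ^ 2 + a * s ^ 2) ^ 2 := by
    rw [← hN]; field_simp
  rw [hq]
  have hc : c ^ 2 = 1 - s ^ 2 := by linarith
  field_simp
  norm_num
  ring_nf
  have hc4 : c ^ 4 = (1 - s ^ 2) ^ 2 := by rw [← hc]; ring
  simp only [hc, hc4]
  ring

lemma angleMap_add (a y : ℝ) : angleMap a (y + 2 * π) = angleMap a y + 2 * π := by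
  simp only [angleMap, Real.sin_add_two_pi, Real.cos_add_two_pi]
  ring

lemma advance (ξ : ℝ) (hξ : 0 < ξ) (y : ℝ → ℝ)
    (hy : ∀ t, HasDerivAt y (ξ + Real.sin (y t) ^ 2) t) (t : ℝ) :
    y (t + 2 * π / Real.sqrt (ξ * (ξ + 1))) = y t + 2 * π := by
  set r := Real.sqrt (ξ * (ξ + 1)) with hr
  have hrpos : 0 < r := Real.sqrt_pos.2 (by positivity)
  have hr2 : r ^ 2 = ξ * (ξ + 1) := Real.sq_sqrt (by positivity)
  have ha : 0 < r / ξ := by positivity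
  have key : ∀ z : ℝ, Real.cos z ^ 2 + (r / ξ) ^ 2 * Real.sin z ^ 2
      = (ξ + Real.sin z ^ 2) / ξ := by
    intro z
    rw [div_pow, hr2, Real.cos_sq']
    field_simp
    ring
  have hH : ∀ z, HasDerivAt (angleMap (r / ξ)) (r / (ξ + Real.sin z ^ 2)) z := by
    intro z
    have h := angleMap_deriv (r / ξ) ha z
    rw [key] at h
    refine h.congr_deriv ?_
    field_simp
  have hmono : StrictMono (angleMap (r / ξ)) := by
    apply strictMono_of_deriv_pos
    intro z
    rw [(hH z).deriv]
    positivity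
  have hlin := const_of_deriv (fun s => angleMap (r / ξ) (y s)) r (by
    intro s
    have h := (hH (y s)).comp s (hy s)
    refine h.congr_deriv ?_
    have : 0 < ξ + Real.sin (y s) ^ 2 := by positivity
    field_simp)
  apply hmono.injective
  have e1 := hlin (t + 2 * π / r)
  have e2 := hlin t
  rw [angleMap_add, e1, e2]
  field_simp
  ring

lemma stays (y : ℝ → ℝ) (hy : ∀ t, HasDerivAt y (Real.sin (y t) ^ 2) t)
    (h0 : Real.sin (y 0) = 0) (t : ℝ) : y t = y 0 := by
  have hl : LipschitzWith 2 (fun z : ℝ => Real.sin z ^ 2) := by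
    apply lipschitzWith_of_nnnorm_deriv_le
    · fun_prop
    · intro z
      have hd : HasDerivAt (fun z : ℝ => Real.sin z ^ 2) _ z := (Real.hasDerivAt_sin z).pow 2
      rw [hd.deriv, ← NNReal.coe_le_coe, coe_nnnorm, Real.norm_eq_abs]
      have h1 := Real.abs_sin_le_one z
      have h2 := Real.abs_cos_le_one z
      simp only [abs_mul]
      norm_num
      nlinarith [abs_nonneg (Real.sin z), abs_nonneg (Real.cos z)]
  have := ODE_solution_unique_univ (v := fun _ z => Real.sin z ^ 2) (s := fun _ => Set.univ)
    (K := 2) (f := y) (g := fun _ => y 0) (t₀ := 0) (fun _ => hl.lipschitzOnWith)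
    (fun t => ⟨hy t, trivial⟩)
    (fun t => ⟨by simpa [h0] using hasDerivAt_const t (y 0), trivial⟩) rfl
  exact congrFun this t

lemma sin_delta {d : ℝ} (h : d = 0 ∨ d = π) : Real.sin d = 0 := by
  rcases h with rfl | rfl <;> simp

lemma neg_delta {d x : ℝ} (h : d = 0 ∨ d = π)
    (hx : ((x : ℝ) : AddCircle (2 * π)) = ((d : ℝ) : AddCircle (2 * π))) :
    ((-x : ℝ) : AddCircle (2 * π)) = ((d : ℝ) : AddCircle (2 * π)) := by
  rw [AddCircle.coe_neg, hx, ← AddCircle.coe_neg]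
  rcases h with rfl | rfl
  · simp
  · have : (π : ℝ) = -π + 2 * π := by ring
    have h2 := AddCircle.coe_add_period (2 * π) (-π)
    rw [← this] at h2
    exact h2.symm

/-- **Kronecker tori of the compactified reversible system**
`φ̇ᵢ = ωᵢ, v̇ₖ = 0, ẏ = Σₖ sin²vₖ + sin²y + Σⱼ sin²qⱼ, q̇ⱼ = 0` on
𝒦̂ = 𝕋^{n+ℓ+m+1} (all coordinates angular, represented by real lifts, the
involution being `G : (φ, v, y, q) ↦ (−φ, v, −y, −q)`).
(1) For any `v⁰` with `ξ = Σₖ sin²v⁰ₖ > 0`, the (n+1)-torus `{v = v⁰, q = 0}` is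
invariant: every solution starting on it stays on it, with `φ(t) = φ(0) + tω`,
`ẏ = ξ + sin²y`, and the y-motion advancing by 2π in time `2π/√(ξ(ξ+1))`; so it
is a Kronecker (n+1)-torus with frequency vector `(ω₁, …, ωₙ, √(ξ(ξ+1)))`.
(2) For every choice of `δv k, δy, δq j ∈ {0, π}`, the n-torus
`{v = δv, y = δy, q = δq}` is an invariant torus carrying the linear flow
`φ̇ = ω` and it is invariant under `G` (membership taken mod 2π): a symmetric
Kronecker n-torus with frequency vector ω. -/
theorem kronecker_tori_compact_reversible
    (n l m : ℕ) (ω : Fin n → ℝ) :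
    -- (1) the invariant (n+1)-tori {v = v⁰, q = 0}
    (∀ v0 : Fin l → ℝ, 0 < (∑ k, Real.sin (v0 k) ^ 2) →
      ∀ (φ : ℝ → Fin n → ℝ) (v : ℝ → Fin l → ℝ) (y : ℝ → ℝ) (q : ℝ → Fin m → ℝ),
      (∀ t i, HasDerivAt (fun s => φ s i) (ω i) t) →
      (∀ t k, HasDerivAt (fun s => v s k) 0 t) →
      (∀ t, HasDerivAt y ((∑ k, Real.sin (v t k) ^ 2) + Real.sin (y t) ^ 2
        + ∑ j, Real.sin (q t j) ^ 2) t) →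
      (∀ t j, HasDerivAt (fun s => q s j) 0 t) →
      v 0 = v0 → q 0 = 0 →
      ∀ t : ℝ, v t = v0 ∧ q t = 0 ∧
        (∀ i, φ t i = φ 0 i + t * ω i) ∧
        HasDerivAt y ((∑ k, Real.sin (v0 k) ^ 2) + Real.sin (y t) ^ 2) t ∧
        y (t + 2 * π / Real.sqrt ((∑ k, Real.sin (v0 k) ^ 2)
          * ((∑ k, Real.sin (v0 k) ^ 2) + 1))) = y t + 2 * π) ∧
    -- (2) the 2^{ℓ+m+1} symmetric Kronecker n-tori {v = δv, y = δy, q = δq}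
    (∀ (δv : Fin l → ℝ) (δy : ℝ) (δq : Fin m → ℝ),
      (∀ k, δv k = 0 ∨ δv k = π) → (δy = 0 ∨ δy = π) →
      (∀ j, δq j = 0 ∨ δq j = π) →
      -- invariance and linear flow
      (∀ (φ : ℝ → Fin n → ℝ) (v : ℝ → Fin l → ℝ) (y : ℝ → ℝ) (q : ℝ → Fin m → ℝ),
        (∀ t i, HasDerivAt (fun s => φ s i) (ω i) t) →
        (∀ t k, HasDerivAt (fun s => v s k) 0 t) →
        (∀ t, HasDerivAt y ((∑ k, Real.sin (v t k) ^ 2) + Real.sin (y t) ^ 2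
          + ∑ j, Real.sin (q t j) ^ 2) t) →
        (∀ t j, HasDerivAt (fun s => q s j) 0 t) →
        v 0 = δv → y 0 = δy → q 0 = δq →
        ∀ t : ℝ, v t = δv ∧ y t = δy ∧ q t = δq ∧
          (∀ i, φ t i = φ 0 i + t * ω i)) ∧
      -- invariance of the torus under G : (φ, v, y, q) ↦ (−φ, v, −y, −q)
      (∀ (φ0 : Fin n → ℝ) (v0 : Fin l → ℝ) (y0 : ℝ) (q0 : Fin m → ℝ),
        ((∀ k, ((v0 k : ℝ) : AddCircle (2 * π)) = ((δv k : ℝ) : AddCircle (2 * π))) ∧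
         ((y0 : ℝ) : AddCircle (2 * π)) = ((δy : ℝ) : AddCircle (2 * π)) ∧
         (∀ j, ((q0 j : ℝ) : AddCircle (2 * π)) = ((δq j : ℝ) : AddCircle (2 * π)))) →
        ((∀ k, ((v0 k : ℝ) : AddCircle (2 * π)) = ((δv k : ℝ) : AddCircle (2 * π))) ∧
         ((-y0 : ℝ) : AddCircle (2 * π)) = ((δy : ℝ) : AddCircle (2 * π)) ∧
         (∀ j, ((-q0 j : ℝ) : AddCircle (2 * π)) = ((δq j : ℝ) : AddCircle (2 * π)))))) := by
  refine ⟨?_, ?_⟩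
  · intro v0 hξ φ v y q hφ hv hy hq hv0 hq0
    have hvt : ∀ t, v t = v0 := by
      intro t; funext k
      have := const_of_deriv (fun s => v s k) 0 (fun t => hv t k) t
      simpa [hv0] using this
    have hqt : ∀ t, q t = 0 := by
      intro t; funext k
      have := const_of_deriv (fun s => q s k) 0 (fun t => hq t k) t
      simpa [hq0] using this
    have hy' : ∀ t, HasDerivAt y ((∑ k, Real.sin (v0 k) ^ 2) + Real.sin (y t) ^ 2) t := by
      intro t
      simpa [hvt, hqt] using hy t
    intro t
    exact ⟨hvt t, hqt t, fun i => const_of_deriv (fun s => φ s i) (ω i) (fun t => hφ t i) t,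
      hy' t, advance _ hξ y hy' t⟩
  · intro δv δy δq hδv hδy hδq
    refine ⟨?_, ?_⟩
    · intro φ v y q hφ hv hy hq hv0 hy0 hq0
      have hvt : ∀ t, v t = δv := by
        intro t; funext k
        have := const_of_deriv (fun s => v s k) 0 (fun t => hv t k) t
        simpa [hv0] using this
      have hqt : ∀ t, q t = δq := by
        intro t; funext k
        have := const_of_deriv (fun s => q s k) 0 (fun t => hq t k) t
        simpa [hq0] using this
      have hy' : ∀ t, HasDerivAt y (Real.sin (y t) ^ 2) t := by
        intro t
        simpa [hvt, hqt, fun k => sin_delta (hδv k), fun k => sin_delta (hδq k)] using hy t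
      intro t
      refine ⟨hvt t, ?_, hqt t,
        fun i => const_of_deriv (fun s => φ s i) (ω i) (fun t => hφ t i) t⟩
      rw [stays y hy' (by rw [hy0]; exact sin_delta hδy) t, hy0]
    · rintro φ0 v0 y0 q0 ⟨h1, h2, h3⟩
      exact ⟨h1, neg_delta hδy h2, fun j => neg_delta (hδq j) (h3 j)⟩
end
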